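/- (Logical completeness of projection abstraction.) For every STRIPS planning model M over fluents F and labels A and every P ⊆ F, every plan that is valid for M is valid for the projection f_P(M); that is, Π_M ⊆ Π_{f_P(M)}. -/

import Mathlib

/-- A STRIPS planning model over fluents `F` and action labels `A`. -/
structure Strips (F : Type*) (A : Type*) where
  prec : A → Set F
  add : A → Set F
  del : A → Set F
  I : Set F
  G : Set F

/-- Result of applying action `a` in state `S`. -/
def Strips.res {F A : Type*} (M : Strips F A) (a : A) (S : Set F) : Set F :=
  (S \ M.del a) ∪ M.add a

/-- The state trajectory `S₀, S₁, …, Sₙ` of a plan from a state. -/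
def Strips.traj {F A : Type*} (M : Strips F A) : List A → Set F → List (Set F)
  | [], S => [S]
  | a :: π, S => S :: M.traj π (M.res a S)

/-- A plan is executable from `S` if each action's precondition holds when applied. -/
def Strips.exec {F A : Type*} (M : Strips F A) : List A → Set F → Prop
  | [], _ => True
  | a :: π, S => M.prec a ⊆ S ∧ M.exec π (M.res a S)

/-- The final state `Sₙ` of the trajectory of a plan from a state. -/
def Strips.finalState {F A : Type*} (M : Strips F A) (π : List A) (S : Set F) : Set F :=
  π.foldl (fun T a => M.res a T) S

/-- The state `S_k` of the trajectory of a plan from a state. -/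
def Strips.stateAt {F A : Type*} (M : Strips F A) (π : List A) (S : Set F) (k : ℕ) : Set F :=
  M.finalState (π.take k) S

/-- A plan is valid if it is executable from the initial state and achieves the goal. -/
def Strips.Valid {F A : Type*} (M : Strips F A) (π : List A) : Prop :=
  M.exec π M.I ∧ M.G ⊆ M.finalState π M.I

/-- The set `Π_M` of valid plans of `M`. -/
def Strips.Plans {F A : Type*} (M : Strips F A) : Set (List A) :=
  {π | M.Valid π}

/-- The projection `f_P(M)` of a model, projecting out the fluents in `P`. -/
def Strips.proj {F A : Type*} (M : Strips F A) (P : Set F) : Strips F A where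
  prec a := M.prec a \ P
  add a := M.add a \ P
  del a := M.del a \ P
  I := M.I \ P
  G := M.G \ P

theorem Strips.res_proj {F A : Type*} (M : Strips F A) (P : Set F) (a : A) (S : Set F) :
    (M.proj P).res a (S \ P) = M.res a S \ P := by
  ext x
  simp only [Strips.res, Strips.proj, Set.mem_union, Set.mem_diff]
  tauto

theorem Strips.finalState_proj {F A : Type*} (M : Strips F A) (P : Set F) (π : List A)
    (S : Set F) : (M.proj P).finalState π (S \ P) = M.finalState π S \ P := by
  induction π generalizing S with
  | nil => rfl
  | cons a π ih =>
    have h := ih (M.res a S)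
    rw [← Strips.res_proj] at h
    exact h

theorem Strips.exec_proj {F A : Type*} (M : Strips F A) (P : Set F) (π : List A)
    (S : Set F) (h : M.exec π S) : (M.proj P).exec π (S \ P) := by
  induction π generalizing S with
  | nil => trivial
  | cons a π ih =>
    refine ⟨Set.diff_subset_diff_left h.1, ?_⟩
    rw [Strips.res_proj]
    exact ih _ h.2

theorem stmt2 {F A : Type*} (M : Strips F A) (P : Set F) :
    M.Plans ⊆ (M.proj P).Plans := by
  intro π h
  refine ⟨Strips.exec_proj M P π M.I h.1, ?_⟩
  have e := Strips.finalState_proj M P π M.I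
  exact (Set.diff_subset_diff_left h.2).trans e.symm.subset
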